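/- For every integer l ≥ 2 and every nonzero complex number q, the linear map from PG_{l,q} to PG_{l,q⁻¹} determined on anti-Wick basis elements by θ^i θ̄^j ↦ q^{ij} θ^j θ̄^i (the linear extension of the multiplicative map sending θ ↦ θ̄ and θ̄ ↦ θ) is an isomorphism of unital ℂ-algebras. -/

import Mathlib

open scoped BigOperators

namespace Para

/-- The paragrassmann algebra `PG_{l,q}` modeled as families of coefficients
in the anti-Wick basis `{θ^i θ̄^j}`. -/
abbrev PG (l : ℕ) := Fin l → Fin l → ℂ

/-- The anti-Wick basis element `θ^i θ̄^j`. -/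
def basis (l : ℕ) (i j : ℕ) : PG l := fun a b => if (a : ℕ) = i ∧ (b : ℕ) = j then 1 else 0

/-- The multiplication of `PG_{l,q}`:
`(θ^i θ̄^j)(θ^k θ̄^m) = q^{-jk} θ^{i+k} θ̄^{j+m}` when `i+k ≤ l-1` and `j+m ≤ l-1`,
and `0` otherwise. -/
noncomputable def pgMul (l : ℕ) (q : ℂ) (f g : PG l) : PG l := fun p r =>
  ∑ i : Fin l, ∑ j : Fin l, ∑ k : Fin l, ∑ m : Fin l,
    if (i : ℕ) + (k : ℕ) = (p : ℕ) ∧ (j : ℕ) + (m : ℕ) = (r : ℕ)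
      then q ^ (-(((j : ℕ) * (k : ℕ) : ℕ) : ℤ)) * f i j * g k m else 0

/-- The linear map `PG_{l,q} → PG_{l,q⁻¹}` determined on anti-Wick basis elements by
`θ^i θ̄^j ↦ q^{ij} θ^j θ̄^i` (the linear extension of the multiplicative map
`θ ↦ θ̄`, `θ̄ ↦ θ`).  Its coefficient form: `(Φ f)_{a b} = q^{ab} f_{b a}`. -/
noncomputable def phi (l : ℕ) (q : ℂ) (f : PG l) : PG l :=
  fun a b => q ^ ((a : ℕ) * (b : ℕ)) * f b a

/-- For every integer `l ≥ 2` and every nonzero complex `q`, the map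
`θ^i θ̄^j ↦ q^{ij} θ^j θ̄^i` is an isomorphism of unital ℂ-algebras
`PG_{l,q} → PG_{l,q⁻¹}`:  it is ℂ-linear, bijective, multiplicative and unital. -/
theorem phi_algebra_isomorphism (l : ℕ) (hl : 2 ≤ l) (q : ℂ) (hq : q ≠ 0) :
    (∀ (c : ℂ) (f g : PG l), phi l q (c • f + g) = c • phi l q f + phi l q g) ∧
    Function.Bijective (phi l q) ∧
    (∀ f g : PG l, phi l q (pgMul l q f g) = pgMul l q⁻¹ (phi l q f) (phi l q g)) ∧
    phi l q (basis l 0 0) = basis l 0 0 := by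
  refine ⟨?_, ⟨?_, ?_⟩, ?_, ?_⟩
  · intro c f g
    funext a b
    simp only [phi, Pi.add_apply, Pi.smul_apply, smul_eq_mul]
    ring
  · intro f g h
    funext a b
    have h1 := congrFun (congrFun h b) a
    simp only [phi] at h1
    exact mul_left_cancel₀ (pow_ne_zero _ hq) h1
  · intro g
    refine ⟨fun a b => (q ^ ((b : ℕ) * (a : ℕ)))⁻¹ * g b a, ?_⟩
    funext a b
    simp only [phi]
    exact mul_inv_cancel_left₀ (pow_ne_zero _ hq) _
  · intro f g
    funext a b
    simp only [phi, pgMul]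
    simp only [Finset.mul_sum]
    rw [Finset.sum_comm]
    refine Finset.sum_congr rfl fun j _ => Finset.sum_congr rfl fun i _ => ?_
    rw [Finset.sum_comm]
    refine Finset.sum_congr rfl fun m _ => Finset.sum_congr rfl fun k _ => ?_
    by_cases h : (j : ℕ) + (m : ℕ) = (a : ℕ) ∧ (i : ℕ) + (k : ℕ) = (b : ℕ)
    · rw [if_pos h, if_pos ⟨h.2, h.1⟩, ← h.1, ← h.2]
      simp only [zpow_neg, zpow_natCast, inv_pow, inv_inv]
      have hjk : q ^ ((j : ℕ) * (k : ℕ)) ≠ 0 := pow_ne_zero _ hq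
      field_simp
      ring
    · rw [if_neg h, if_neg (fun h' => h ⟨h'.2, h'.1⟩), mul_zero]
  · funext a b
    simp only [phi, basis]
    by_cases h : (a : ℕ) = 0 ∧ (b : ℕ) = 0
    · simp [h.1, h.2]
    · rw [if_neg h, if_neg (fun h' => h ⟨h'.2, h'.1⟩), mul_zero]

end Para
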